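/- arXiv:2108.07307 — 3 statements merged into one kernel-verified Lean document; each statement's English description precedes it below -/
import Mathlib

section
/- Let X ⊆ ℝ × ℝ, let p be ⪯-maximal in X, and let q be ⪯-maximal in the slice {x ∈ X | x.2 < p.2}. If q.1 > p.1, then q is ⪯-maximal in X. (Correctness of exploring the region R₃ of a Pareto-optimal point (c, e): a point Pareto-optimal among those with strictly smaller explainability and with strictly larger correctness than c is Pareto-optimal in the whole space.) -/
/-- `p` is `⪯`-maximal (Pareto-optimal) in `X ⊆ ℝ × ℝ`, where `⪯` is the
componentwise product order on `ℝ × ℝ`. -/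
def ParetoMax (X : Set (ℝ × ℝ)) (p : ℝ × ℝ) : Prop :=
  p ∈ X ∧ ∀ q ∈ X, q ≠ p → ¬ p ≤ q

/-!
A point `r ∈ X` above `q` has `p.1 < q.1 ≤ r.1`, so maximality of `p` rules out `p.2 ≤ r.2`.
Hence everything in `X` above `q` already lies in the slice in which `q` is maximal.
-/

theorem paretoMax_iff_maximal {X : Set (ℝ × ℝ)} {p : ℝ × ℝ} :
    ParetoMax X p ↔ Maximal (· ∈ X) p := by
  rw [maximal_mem_iff]
  exact and_congr_right fun _ ↦ forall₂_congr fun _ _ ↦ by rw [not_imp_not, eq_comm]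

theorem maximal_of_maximal_and {α : Type*} [LE α] {P Q : α → Prop} {x : α}
    (hx : Maximal (fun y ↦ P y ∧ Q y) x) (hQ : ∀ ⦃y⦄, P y → x ≤ y → Q y) : Maximal P x :=
  ⟨hx.prop.1, fun _ hy hxy ↦ hx.le_of_ge ⟨hy, hQ hy hxy⟩ hxy⟩

theorem not_snd_le_of_maximal_of_fst_lt {α β : Type*} [Preorder α] [Preorder β]
    {P : α × β → Prop} {p r : α × β} (hp : Maximal P p) (hr : P r) (h : p.1 < r.1) :
    ¬ p.2 ≤ r.2 :=
  fun hle ↦ hp.not_gt hr (Prod.lt_iff.2 (.inl ⟨h, hle⟩))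

theorem region_R3_exploration_sound_general {α β : Type*} [Preorder α] [LinearOrder β]
    {X : Set (α × β)} {p q : α × β} (hp : Maximal (· ∈ X) p)
    (hq : Maximal (· ∈ {x ∈ X | x.2 < p.2}) q) (hc : p.1 < q.1) :
    Maximal (· ∈ X) q :=
  maximal_of_maximal_and hq fun _ hr hqr ↦
    not_le.1 (not_snd_le_of_maximal_of_fst_lt hp hr (hc.trans_le hqr.1))

theorem region_R3_exploration_sound
    (X : Set (ℝ × ℝ)) (p q : ℝ × ℝ)
    (hp : ParetoMax X p)
    (hq : ParetoMax {x ∈ X | x.2 < p.2} q)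
    (hc : q.1 > p.1) :
    ParetoMax X q := by
  rw [paretoMax_iff_maximal] at hp hq ⊢
  exact region_R3_exploration_sound_general hp hq hc
end

section
/- Let Z be a measurable space, μ a probability measure on Z, H a finite type, and for each h : H let E h ⊆ Z be a measurable set (the set of inputs on which hypothesis h errs), with true error err h = μ(E h). For every ε ∈ (0,1) and every m : ℕ, the m-fold product measure μ^⊗m (on functions Fin m → Z) of the misleading-sample event {s | ∃ h : H, err h > ε and s i ∉ E h for all i} is at most (card H)·(1−ε)^m. (Union bound underlying the realizable-case sample complexity of finite interpretation classes.) -/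
open MeasureTheory

section ConsistentSamples

variable {ι Z : Type*} [Fintype ι] [MeasurableSpace Z] (μ : Measure Z)

theorem measure_pi_forall_notMem [SigmaFinite μ] (A : Set Z) :
    Measure.pi (fun _ : ι => μ) {s | ∀ i, s i ∉ A} = μ Aᶜ ^ Fintype.card ι := by
  have hpi : {s : ι → Z | ∀ i, s i ∉ A} = Set.univ.pi fun _ => Aᶜ := by
    ext s
    simp
  rw [hpi, Measure.pi_pi, Finset.prod_const, Finset.card_univ]

variable [IsProbabilityMeasure μ]

theorem measure_pi_forall_notMem_le_one_sub_pow {A : Set Z} (hA : NullMeasurableSet A μ)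
    {ε : ENNReal} (hε : ε ≤ μ A) :
    Measure.pi (fun _ : ι => μ) {s | ∀ i, s i ∉ A} ≤ (1 - ε) ^ Fintype.card ι := by
  rw [measure_pi_forall_notMem, prob_compl_eq_one_sub₀ hA]
  gcongr

theorem misleading_sample_union_bound_general {H : Type*} (E : H → Set Z)
    (hE : ∀ h, NullMeasurableSet (E h) μ) (ε : ENNReal) :
    Measure.pi (fun _ : ι => μ) {s | ∃ h, ε < μ (E h) ∧ ∀ i, s i ∉ E h}
      ≤ {h | ε < μ (E h)}.encard * (1 - ε) ^ Fintype.card ι := by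
  set bad : Set H := {h | ε < μ (E h)}
  obtain hfin | hinf := bad.finite_or_infinite
  · have hunion : {s : ι → Z | ∃ h, ε < μ (E h) ∧ ∀ i, s i ∉ E h}
        = ⋃ h ∈ bad, {s | ∀ i, s i ∉ E h} := by
      ext s
      simp [bad]
    calc Measure.pi (fun _ : ι => μ) {s | ∃ h, ε < μ (E h) ∧ ∀ i, s i ∉ E h}
        ≤ ∑' h : bad, Measure.pi (fun _ : ι => μ) {s | ∀ i, s i ∉ E h} := by
          rw [hunion]
          exact measure_biUnion_le _ hfin.countable _
      _ ≤ ∑' _ : bad, (1 - ε) ^ Fintype.card ι :=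
          ENNReal.tsum_le_tsum fun h =>
            measure_pi_forall_notMem_le_one_sub_pow μ (hE h) h.2.le
      _ = bad.encard * (1 - ε) ^ Fintype.card ι := ENNReal.tsum_set_const _ _
  · obtain ⟨h, hbad⟩ := hinf.nonempty
    have hε : ε < 1 := hbad.trans_le prob_le_one
    have hpow : (1 - ε) ^ Fintype.card ι ≠ 0 := pow_ne_zero _ (tsub_pos_of_lt hε).ne'
    simp [hinf.encard_eq, ENNReal.top_mul hpow]

end ConsistentSamples

theorem misleading_sample_union_bound
    {Z : Type*} [MeasurableSpace Z] (μ : Measure Z) [IsProbabilityMeasure μ]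
    {H : Type*} [Fintype H]
    (E : H → Set Z) (hE : ∀ h, MeasurableSet (E h))
    (ε : ℝ) (hε0 : 0 < ε) (hε1 : ε < 1) (m : ℕ) :
    (Measure.pi (fun _ : Fin m => μ))
        {s : Fin m → Z | ∃ h : H,
          ENNReal.ofReal ε < μ (E h) ∧ ∀ i : Fin m, s i ∉ E h}
      ≤ (Fintype.card H : ENNReal) * ENNReal.ofReal ((1 - ε) ^ m) := by
  grw [misleading_sample_union_bound_general μ E (fun h => (hE h).nullMeasurableSet),
    Set.encard_le_card]
  simp [ENNReal.ofReal_pow (sub_nonneg.2 hε1.le), ENNReal.ofReal_sub _ hε0.le]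
end

section
/- Let Z be a measurable space, μ a probability measure on Z, H a finite nonempty type with n = card H, and for each h : H let E h ⊆ Z be a measurable set with true error err h = μ(E h). Let ε, δ ∈ (0,1) and let m : ℕ satisfy m ≥ log(n/δ)/ε (natural logarithm). Then the m-fold product measure μ^⊗m of the event {s : Fin m → Z | ∃ h : H, err h > ε and s i ∉ E h for all i} is at most δ. Equivalently, with probability at least 1−δ over m i.i.d. samples, every hypothesis consistent with the sample has true error at most ε. (The paper's realizable sample-complexity bound m_E(ε, δ) ≤ ⌈log(|E|/δ)/ε⌉ for a finite class of interpretations.) -/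
open MeasureTheory

/-!
A fixed hypothesis of error at least `ε` survives `m` independent samples with probability at most
`(1 - ε) ^ m ≤ exp (-(m * ε))`. By the union bound, some hypothesis of `H` does so with probability
at most `card H * exp (-(m * ε))`, which is at most `δ` once `log (card H / δ) ≤ m * ε`.
-/

theorem mul_exp_neg_le_of_log_div_le {x y t : ℝ} (hy : 0 < y) (h : Real.log (x / y) ≤ t) :
    x * Real.exp (-t) ≤ y := by
  have hdiv : x / y ≤ Real.exp t := (Real.le_exp_log _).trans (Real.exp_le_exp.2 h)
  rwa [Real.exp_neg, mul_inv_le_iff₀ (Real.exp_pos t), ← div_le_iff₀' hy]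

theorem one_sub_ofReal_le_ofReal_exp_neg (x : ℝ) :
    1 - ENNReal.ofReal x ≤ ENNReal.ofReal (Real.exp (-x)) := by
  rw [tsub_le_iff_right, ← ENNReal.ofReal_one]
  calc ENNReal.ofReal 1 ≤ ENNReal.ofReal (Real.exp (-x) + x) :=
        ENNReal.ofReal_le_ofReal (sub_le_iff_le_add.1 (Real.one_sub_le_exp_neg x))
    _ ≤ ENNReal.ofReal (Real.exp (-x)) + ENNReal.ofReal x := ENNReal.ofReal_add_le

theorem measure_setOf_exists_and_le {α H : Type*} [MeasurableSpace α] [Fintype H] (ν : Measure α)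
    {p : H → Prop} {S : H → Set α} {c : ENNReal} (hc : ∀ h, p h → ν (S h) ≤ c) :
    ν {x | ∃ h, p h ∧ x ∈ S h} ≤ Fintype.card H * c := by
  have hle (h : H) : ν {x | p h ∧ x ∈ S h} ≤ c := by
    by_cases hp : p h
    · simpa only [hp, true_and, Set.ofPred_mem_eq] using hc h hp
    · simp only [hp, false_and, Set.ofPred_false, measure_empty, zero_le]
  calc ν {x | ∃ h, p h ∧ x ∈ S h} = ν (⋃ h, {x | p h ∧ x ∈ S h}) := by rw [Set.ofPred_exists]
    _ ≤ ∑ h, ν {x | p h ∧ x ∈ S h} := measure_iUnion_fintype_le _ _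
    _ ≤ Fintype.card H • c := Finset.sum_le_card_nsmul _ _ _ fun h _ => hle h
    _ = Fintype.card H * c := nsmul_eq_mul _ _

section Product

variable {ι : Type*} [Fintype ι] {Z : ι → Type*} [∀ i, MeasurableSpace (Z i)]
  (μ : ∀ i, Measure (Z i)) [∀ i, IsProbabilityMeasure (μ i)] {A : ∀ i, Set (Z i)}

theorem measure_pi_forall_notMem_s14 (hA : ∀ i, NullMeasurableSet (A i) (μ i)) :
    Measure.pi μ {s | ∀ i, s i ∉ A i} = ∏ i, (1 - μ i (A i)) := by
  have hbox : {s : ∀ i, Z i | ∀ i, s i ∉ A i} = Set.univ.pi fun i => (A i)ᶜ := by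
    ext s
    simp only [Set.mem_ofPred_eq, Set.mem_univ_pi, Set.mem_compl_iff]
  simp_rw [hbox, Measure.pi_pi, prob_compl_eq_one_sub₀ (hA _)]

theorem measure_pi_forall_notMem_le_exp (hA : ∀ i, NullMeasurableSet (A i) (μ i)) {ε : ι → ℝ}
    (hε : ∀ i, ENNReal.ofReal (ε i) ≤ μ i (A i)) :
    Measure.pi μ {s | ∀ i, s i ∉ A i} ≤ ENNReal.ofReal (Real.exp (-∑ i, ε i)) :=
  calc Measure.pi μ {s | ∀ i, s i ∉ A i} = ∏ i, (1 - μ i (A i)) := measure_pi_forall_notMem_s14 μ hA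
    _ ≤ ∏ i, ENNReal.ofReal (Real.exp (-ε i)) := Finset.prod_le_prod' fun i _ =>
        (tsub_le_tsub_left (hε i) 1).trans (one_sub_ofReal_le_ofReal_exp_neg (ε i))
    _ = ENNReal.ofReal (Real.exp (-∑ i, ε i)) := by
        rw [← ENNReal.ofReal_prod_of_nonneg fun i _ => (Real.exp_pos _).le, ← Real.exp_sum,
          Finset.sum_neg_distrib]

end Product

section FiniteClass

variable {Z ι H : Type*} [MeasurableSpace Z] [Fintype ι] [Fintype H]
  (μ : Measure Z) [IsProbabilityMeasure μ] {E : H → Set Z}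

theorem measure_pi_exists_consistent_le_card_mul_exp (hE : ∀ h, NullMeasurableSet (E h) μ)
    (ε : ℝ) :
    Measure.pi (fun _ : ι => μ) {s | ∃ h, ENNReal.ofReal ε ≤ μ (E h) ∧ ∀ i, s i ∉ E h}
      ≤ ENNReal.ofReal (Fintype.card H * Real.exp (-(Fintype.card ι * ε))) := by
  have hfixed (h : H) (hε : ENNReal.ofReal ε ≤ μ (E h)) :
      Measure.pi (fun _ : ι => μ) {s | ∀ i, s i ∉ E h}
        ≤ ENNReal.ofReal (Real.exp (-(Fintype.card ι * ε))) := by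
    simpa only [Finset.sum_const, Finset.card_univ, nsmul_eq_mul] using
      measure_pi_forall_notMem_le_exp (fun _ : ι => μ) (fun _ => hE h) fun _ => hε
  rw [ENNReal.ofReal_mul (Nat.cast_nonneg _), ENNReal.ofReal_natCast]
  exact measure_setOf_exists_and_le _ hfixed

theorem realizable_sample_complexity_general (hE : ∀ h, NullMeasurableSet (E h) μ)
    {ε δ : ℝ} (hε : 0 < ε) (hδ : 0 < δ)
    (hm : Real.log (Fintype.card H / δ) / ε ≤ Fintype.card ι) :
    Measure.pi (fun _ : ι => μ) {s | ∃ h, ENNReal.ofReal ε ≤ μ (E h) ∧ ∀ i, s i ∉ E h}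
      ≤ ENNReal.ofReal δ :=
  (measure_pi_exists_consistent_le_card_mul_exp μ hE ε).trans <|
    ENNReal.ofReal_le_ofReal <| mul_exp_neg_le_of_log_div_le hδ <| (div_le_iff₀ hε).1 hm

end FiniteClass

theorem realizable_sample_complexity
    {Z : Type*} [MeasurableSpace Z] (μ : Measure Z) [IsProbabilityMeasure μ]
    {H : Type*} [Fintype H] [Nonempty H]
    (E : H → Set Z) (hE : ∀ h, MeasurableSet (E h))
    (ε δ : ℝ) (hε0 : 0 < ε) (hε1 : ε < 1) (hδ0 : 0 < δ) (hδ1 : δ < 1)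
    (m : ℕ) (hm : (m : ℝ) ≥ Real.log ((Fintype.card H : ℝ) / δ) / ε) :
    (Measure.pi (fun _ : Fin m => μ))
        {s : Fin m → Z | ∃ h : H,
          ENNReal.ofReal ε < μ (E h) ∧ ∀ i : Fin m, s i ∉ E h}
      ≤ ENNReal.ofReal δ := by
  refine (measure_mono ?_).trans <| realizable_sample_complexity_general (ι := Fin m) μ
    (fun h => (hE h).nullMeasurableSet) hε0 hδ0 (by rwa [Fintype.card_fin])
  exact fun _ ⟨h, herr, hcons⟩ => ⟨h, herr.le, hcons⟩
end
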